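/- Let u ∈ L^∞(ℝ^n × ℝ^m) and let E be the set of x ∈ ℝ^n such that (x,y) is a Lebesgue point of u for almost every y ∈ ℝ^m. Then E has full Lebesgue measure in ℝ^n, and every x ∈ E is a Lebesgue point of the function I_ρ(x) := ∫_{ℝ^m} u(x,y) ρ(y) dy, simultaneously for all ρ ∈ L^1(ℝ^m). -/

import Mathlib

open MeasureTheory Filter

/-- `x` is a Lebesgue point of `f`: averages of `|f - f x|` over balls centered at `x`
shrinking to `x` tend to `0`. -/
def LebesguePoint {E : Type*} [MeasurableSpace E] [PseudoMetricSpace E]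
    (μ : Measure E) (f : E → ℝ) (x : E) : Prop :=
  Filter.Tendsto (fun r : ℝ => ⨍ y in Metric.ball x r, |f y - f x| ∂μ)
    (nhdsWithin 0 (Set.Ioi 0)) (nhds 0)

/-! For every `z`, translating the integration variable by `z` gives
`|I_ρ(x') - I_ρ(x)| ≤ M ‖ρ(· + z) - ρ‖₁ + ∫ |u(x', y + z) - u(x, y)| |ρ y| dy`.
Averaging over `(x', z)` in the ball of radius `r` around `(x, 0)` bounds the mean oscillation of
`I_ρ` at `x` by the sum of two terms. The first tends to `0` by continuity of translations in `L¹`.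
By Fubini the second is the integral against `|ρ|` of the mean oscillation of `u` over the ball of
radius `r` around `(x, y)`; this tends to `0` for almost every `y` when `x ∈ E`, and is at most
`2M`, so dominated convergence applies. -/

open scoped Topology

section Average

variable {α β V : Type*} {mα : MeasurableSpace α} {mβ : MeasurableSpace β}
  [NormedAddCommGroup V] [NormedSpace ℝ V] {μ : Measure α} {ν : Measure β}

lemma norm_average_le_of_norm_le_const {f : α → V} {C : ℝ} (hC : 0 ≤ C)
    (hf : ∀ᵐ x ∂μ, ‖f x‖ ≤ C) : ‖⨍ x, f x ∂μ‖ ≤ C := by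
  rw [average_eq']
  calc ‖∫ x, f x ∂(μ Set.univ)⁻¹ • μ‖
      ≤ C * ((μ Set.univ)⁻¹ • μ).real Set.univ :=
        norm_integral_le_of_norm_le_const (Measure.ae_smul_measure hf _)
    _ ≤ C := mul_le_of_le_one_right hC measureReal_le_one

lemma setAverage_preimage_of_measurePreserving {e : α → β} (he : MeasurePreserving e μ ν)
    (hemb : MeasurableEmbedding e) (f : β → V) (s : Set β) :
    ⨍ x in e ⁻¹' s, f (e x) ∂μ = ⨍ y in s, f y ∂ν := by
  rw [setAverage_eq, setAverage_eq, he.setIntegral_preimage_emb hemb, measureReal_def,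
    he.measure_preimage_emb hemb, measureReal_def]

variable [SFinite μ] [SFinite ν] {s : Set α} {t : Set β}

lemma setAverage_prod_fst (f : α → V) (ht₀ : ν t ≠ 0) (ht : ν t ≠ ⊤) :
    ⨍ p in s ×ˢ t, f p.1 ∂μ.prod ν = ⨍ x in s, f x ∂μ := by
  have hν : ν.real t ≠ 0 := (measureReal_ne_zero_iff ht).2 ht₀
  rw [setAverage_eq, setAverage_eq, ← Measure.prod_restrict, integral_fun_fst,
    measureReal_prod_prod, measureReal_restrict_apply_univ, smul_smul, mul_inv,
    inv_mul_cancel_right₀ hν]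

lemma setAverage_prod_snd (f : β → V) (hs₀ : μ s ≠ 0) (hs : μ s ≠ ⊤) :
    ⨍ p in s ×ˢ t, f p.2 ∂μ.prod ν = ⨍ y in t, f y ∂ν := by
  have hμ : μ.real s ≠ 0 := (measureReal_ne_zero_iff hs).2 hs₀
  rw [setAverage_eq, setAverage_eq, ← Measure.prod_restrict, integral_fun_snd,
    measureReal_prod_prod, measureReal_restrict_apply_univ, smul_smul, mul_inv_rev,
    inv_mul_cancel_right₀ hμ]

end Average

section LebesguePoint

lemma lebesguePoint_of_continuousAt {X : Type*} [PseudoMetricSpace X] [MeasurableSpace X]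
    [OpensMeasurableSpace X] (μ : Measure X) {f : X → ℝ} {x : X} (hf : ContinuousAt f x) :
    LebesguePoint μ f x := by
  refine (Metric.nhds_basis_closedBall.tendsto_right_iff).2 fun ε hε => ?_
  obtain ⟨δ, hδ, hfδ⟩ := Metric.continuousAt_iff.1 hf ε hε
  filter_upwards [Ioo_mem_nhdsGT hδ] with r hr
  rw [mem_closedBall_zero_iff]
  refine norm_average_le_of_norm_le_const hε.le ?_
  filter_upwards [ae_restrict_mem measurableSet_ball] with y hy
  rw [Real.norm_eq_abs, abs_abs]
  exact (hfδ (hy.trans hr.2)).le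

theorem ae_lebesguePoint {V : Type*} [NormedAddCommGroup V] [NormedSpace ℝ V]
    [FiniteDimensional ℝ V] [MeasurableSpace V] [BorelSpace V] (μ : Measure V)
    [μ.IsAddHaarMeasure] {f : V → ℝ} (hf : LocallyIntegrable f μ) :
    ∀ᵐ x ∂μ, LebesguePoint μ f x := by
  filter_upwards [IsUnifLocDoublingMeasure.ae_tendsto_average_norm_sub μ hf 1] with x hx
  have hclosed : Tendsto (fun r : ℝ => ⨍ y in Metric.closedBall x r, |f y - f x| ∂μ)
      (𝓝[>] 0) (𝓝 0) := by
    refine hx (fun _ => x) id tendsto_id ?_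
    filter_upwards [self_mem_nhdsWithin] with r (hr : 0 < r)
    exact Metric.mem_closedBall_self (by simpa using hr.le)
  refine hclosed.congr' ?_
  filter_upwards [self_mem_nhdsWithin] with r (hr : 0 < r)
  refine setAverage_congr ?_
  rw [← Metric.ball_union_sphere]
  exact union_ae_eq_left_of_ae_eq_empty
    (ae_eq_empty.2 (Measure.addHaar_sphere_of_ne_zero μ x hr.ne'))

end LebesguePoint

section TranslationModulus

variable {G : Type*} [AddCommGroup G] [MeasurableSpace G] (ν : Measure G)

/-- The `L¹` modulus of continuity `‖ρ(· + z) - ρ‖₁` of `ρ`. -/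
noncomputable def translationModulus (ρ : G → ℝ) (z : G) : ℝ :=
  ∫ y, |ρ (y + z) - ρ y| ∂ν

variable {ν} {ρ : G → ℝ}

@[simp]
lemma translationModulus_zero : translationModulus ν ρ 0 = 0 := by
  simp [translationModulus]

lemma translationModulus_nonneg (z : G) : 0 ≤ translationModulus ν ρ z :=
  integral_nonneg fun _ => abs_nonneg _

lemma translationModulus_le [MeasurableAdd G] [ν.IsAddRightInvariant] (hρ : Integrable ρ ν)
    (z : G) : translationModulus ν ρ z ≤ 2 * ∫ y, |ρ y| ∂ν := by
  have hρz : Integrable (fun y => ρ (y + z)) ν := hρ.comp_add_right z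
  calc translationModulus ν ρ z
      ≤ ∫ y, (|ρ (y + z)| + |ρ y|) ∂ν :=
        integral_mono (hρz.sub hρ).abs (hρz.abs.add hρ.abs) fun y => abs_sub _ _
    _ = 2 * ∫ y, |ρ y| ∂ν := by
        rw [integral_add hρz.abs hρ.abs, integral_add_right_eq_self (fun y => |ρ y|), two_mul]

lemma continuous_translationModulus [TopologicalSpace G] [IsTopologicalAddGroup G] [BorelSpace G]
    [IsLocallyFiniteMeasure ν] [ν.InnerRegularCompactLTTop] [ν.IsAddLeftInvariant]
    (hρ : Integrable ρ ν) : Continuous (translationModulus ν ρ) := by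
  have hρL : MemLp ρ 1 ν := memLp_one_iff_integrable.2 hρ
  have : Fact ((1 : ENNReal) ≠ ⊤) := ⟨ENNReal.one_ne_top⟩
  have hcont : Continuous fun z : G => ‖(DomAddAct.mk z +ᵥ hρL.toLp ρ) - hρL.toLp ρ‖ :=
    by fun_prop
  refine hcont.congr fun z => ?_
  have hρz : MemLp (fun y => ρ (z +ᵥ y)) 1 ν :=
    hρL.comp_measurePreserving (measurePreserving_vadd z ν)
  rw [L1.norm_eq_integral_norm, DomAddAct.mk_vadd_toLp, ← MemLp.toLp_sub]
  refine integral_congr_ae ?_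
  filter_upwards [(hρz.sub hρL).coeFn_toLp] with y hy
  rw [hy, Pi.sub_apply, vadd_eq_add, add_comm z y, Real.norm_eq_abs]

lemma abs_integral_mul_sub_integral_mul_le [MeasurableAdd G] [ν.IsAddRightInvariant]
    {v w : G → ℝ} {M : ℝ} (hv : Measurable v) (hw : Measurable w) (hvM : ∀ y, |v y| ≤ M)
    (hwM : ∀ y, |w y| ≤ M) (hρ : Integrable ρ ν) (z : G) :
    |(∫ y, v y * ρ y ∂ν) - ∫ y, w y * ρ y ∂ν|
      ≤ M * translationModulus ν ρ z + ∫ y, |v (y + z) - w y| * |ρ y| ∂ν := by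
  have hvz : Measurable fun y => v (y + z) := hv.comp (measurable_add_const z)
  have hρz : Integrable (fun y => ρ (y + z)) ν := hρ.comp_add_right z
  have hvρ : Integrable (fun y => v (y + z) * ρ (y + z)) ν :=
    hρz.bdd_mul hvz.aestronglyMeasurable (ae_of_all _ fun y => hvM (y + z))
  have hwρ : Integrable (fun y => w y * ρ y) ν :=
    hρ.bdd_mul hw.aestronglyMeasurable (ae_of_all _ hwM)
  have htrans : Integrable (fun y => M * |ρ (y + z) - ρ y|) ν := (hρz.sub hρ).abs.const_mul M
  have hosc : Integrable (fun y => |v (y + z) - w y| * |ρ y|) ν := by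
    refine hρ.abs.bdd_mul (c := M + M) (hvz.sub hw).abs.aestronglyMeasurable
      (ae_of_all _ fun y => ?_)
    rw [Real.norm_eq_abs, abs_abs]
    exact (abs_sub _ _).trans (add_le_add (hvM _) (hwM _))
  have hpointwise : ∀ y, |v (y + z) * ρ (y + z) - w y * ρ y|
      ≤ M * |ρ (y + z) - ρ y| + |v (y + z) - w y| * |ρ y| := fun y =>
    calc |v (y + z) * ρ (y + z) - w y * ρ y|
        = |v (y + z) * (ρ (y + z) - ρ y) + (v (y + z) - w y) * ρ y| := by ring_nf
      _ ≤ |v (y + z)| * |ρ (y + z) - ρ y| + |v (y + z) - w y| * |ρ y| := by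
        simpa only [abs_mul] using
          abs_add_le (v (y + z) * (ρ (y + z) - ρ y)) ((v (y + z) - w y) * ρ y)
      _ ≤ M * |ρ (y + z) - ρ y| + |v (y + z) - w y| * |ρ y| := by gcongr; exact hvM _
  rw [← integral_add_right_eq_self (fun y => v y * ρ y) z, ← integral_sub hvρ hwρ]
  calc |∫ y, (v (y + z) * ρ (y + z) - w y * ρ y) ∂ν|
      ≤ ∫ y, |v (y + z) * ρ (y + z) - w y * ρ y| ∂ν := abs_integral_le_integral_abs
    _ ≤ ∫ y, (M * |ρ (y + z) - ρ y| + |v (y + z) - w y| * |ρ y|) ∂ν :=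
        integral_mono (hvρ.sub hwρ).abs (htrans.add hosc) hpointwise
    _ = M * translationModulus ν ρ z + ∫ y, |v (y + z) - w y| * |ρ y| ∂ν := by
        rw [integral_add htrans hosc, integral_const_mul, translationModulus]

end TranslationModulus

section FiberIntegral

variable {X G : Type*} [MeasurableSpace X] [MeasurableSpace G]

/-- The weighted average `I_ρ(x) = ∫ u(x, y) ρ(y) dy` of `u` over the fiber of `x`. -/
noncomputable def fiberIntegral (ν : Measure G) (u : X × G → ℝ) (ρ : G → ℝ) (x : X) : ℝ :=
  ∫ y, u (x, y) * ρ y ∂ν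

variable {u : X × G → ℝ} {M : ℝ} {ρ : G → ℝ} {ν : Measure G}

lemma integral_abs_fiberIntegral_sub_le [AddCommGroup G] [TopologicalSpace G]
    [IsTopologicalAddGroup G] [BorelSpace G] [SecondCountableTopology G]
    [IsLocallyFiniteMeasure ν] [ν.InnerRegularCompactLTTop] [SFinite ν] [ν.IsAddLeftInvariant]
    (hu : Measurable u) (huM : ∀ p, |u p| ≤ M) (hρ : Integrable ρ ν)
    (κ : Measure (X × G)) [IsFiniteMeasure κ] (x : X) :
    ∫ p, |fiberIntegral ν u ρ p.1 - fiberIntegral ν u ρ x| ∂κ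
      ≤ M * ∫ p, translationModulus ν ρ p.2 ∂κ
        + ∫ y, (∫ p, |u (p.1, y + p.2) - u (x, y)| ∂κ) * |ρ y| ∂ν := by
  have hmod : Integrable (fun p : X × G => translationModulus ν ρ p.2) κ := by
    refine .of_bound
      ((continuous_translationModulus hρ).measurable.comp measurable_snd).aestronglyMeasurable
      (2 * ∫ y, |ρ y| ∂ν) (ae_of_all _ fun p => ?_)
    rw [Real.norm_of_nonneg (translationModulus_nonneg _)]
    exact translationModulus_le hρ p.2
  have hosc : Integrable
      (Function.uncurry fun (p : X × G) y => |u (p.1, y + p.2) - u (x, y)| * |ρ y|)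
      (κ.prod ν) := by
    refine (hρ.abs.comp_snd κ).bdd_mul (c := M + M) (Measurable.aestronglyMeasurable (by fun_prop))
      (ae_of_all _ fun q => ?_)
    rw [Real.norm_eq_abs, abs_abs]
    exact (abs_sub _ _).trans (add_le_add (huM _) (huM _))
  have hosc_fiber : Integrable
      (fun p : X × G => ∫ y, |u (p.1, y + p.2) - u (x, y)| * |ρ y| ∂ν) κ :=
    hosc.integral_prod_left
  calc ∫ p, |fiberIntegral ν u ρ p.1 - fiberIntegral ν u ρ x| ∂κ
      ≤ ∫ p, (M * translationModulus ν ρ p.2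
          + ∫ y, |u (p.1, y + p.2) - u (x, y)| * |ρ y| ∂ν) ∂κ :=
        integral_mono_of_nonneg (ae_of_all _ fun _ => abs_nonneg _)
          ((hmod.const_mul M).add hosc_fiber)
          (ae_of_all _ fun p => abs_integral_mul_sub_integral_mul_le (by fun_prop) (by fun_prop)
            (fun _ => huM _) (fun _ => huM _) hρ p.2)
    _ = M * ∫ p, translationModulus ν ρ p.2 ∂κ
        + ∫ p, ∫ y, |u (p.1, y + p.2) - u (x, y)| * |ρ y| ∂ν ∂κ := by
        rw [integral_add (hmod.const_mul M) hosc_fiber, integral_const_mul]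
    _ = M * ∫ p, translationModulus ν ρ p.2 ∂κ
        + ∫ y, (∫ p, |u (p.1, y + p.2) - u (x, y)| ∂κ) * |ρ y| ∂ν := by
        simp only [integral_integral_swap hosc, integral_mul_const]

end FiberIntegral

section ProductBalls

variable {X G : Type*} [PseudoMetricSpace X] [MeasurableSpace X]
  [SeminormedAddCommGroup G] [MeasurableSpace G] [BorelSpace G]
  {μ : Measure X} {ν : Measure G} [SFinite μ] [SFinite ν] [ν.IsAddLeftInvariant]
  {u : X × G → ℝ} {M : ℝ} {ρ : G → ℝ}

lemma setAverage_ball_prod_translate {V : Type*} [NormedAddCommGroup V] [NormedSpace ℝ V]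
    (f : X × G → V) (x : X) (y : G) (r : ℝ) :
    ⨍ p in Metric.ball (x, (0 : G)) r, f (p.1, y + p.2) ∂μ.prod ν
      = ⨍ p in Metric.ball (x, y) r, f p ∂μ.prod ν := by
  have hpre : Prod.map id (y + ·) ⁻¹' Metric.ball (x, y) r = Metric.ball (x, (0 : G)) r := by
    rw [← ball_prod_same, ← ball_prod_same, Set.preimage_prod_map_prod, preimage_add_ball]
    simp
  rw [← hpre]
  exact setAverage_preimage_of_measurePreserving
    ((MeasurePreserving.id μ).prod (measurePreserving_add_left ν y))
    (MeasurableEmbedding.id.prodMap (measurableEmbedding_addLeft y)) f _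

lemma stronglyMeasurable_setAverage_ball_abs_sub [SecondCountableTopology G] (hu : Measurable u)
    (x : X) (r : ℝ) :
    StronglyMeasurable fun y : G => ⨍ p in Metric.ball (x, y) r, |u p - u (x, y)| ∂μ.prod ν := by
  simp only [← setAverage_ball_prod_translate (μ := μ) (ν := ν) (fun p => |u p - u (x, _)|),
    setAverage_eq]
  have hosc : StronglyMeasurable
      (Function.uncurry fun y (p : X × G) => |u (p.1, y + p.2) - u (x, y)|) :=
    Measurable.stronglyMeasurable (by unfold Function.uncurry; fun_prop)
  exact hosc.integral_prod_right.const_smul ((μ.prod ν).real (Metric.ball (x, 0) r))⁻¹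

lemma tendsto_integral_setAverage_ball_abs_sub_mul [SecondCountableTopology G]
    (hu : Measurable u) (huM : ∀ p, |u p| ≤ M) (hρ : Integrable ρ ν) {x : X}
    (hx : ∀ᵐ y ∂ν, LebesguePoint (μ.prod ν) u (x, y)) :
    Tendsto (fun r : ℝ => ∫ y, (⨍ p in Metric.ball (x, y) r, |u p - u (x, y)| ∂μ.prod ν) * |ρ y| ∂ν)
      (𝓝[>] 0) (𝓝 0) := by
  have hM : 0 ≤ M := (abs_nonneg _).trans (huM (x, 0))
  refine (tendsto_integral_filter_of_dominated_convergence (f := fun _ => 0)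
    (fun y => (M + M) * |ρ y|) (.of_forall fun r => ?_)
    (.of_forall fun r => ae_of_all _ fun y => ?_) (hρ.abs.const_mul _) ?_).mono_right
    (by rw [integral_zero])
  · exact (stronglyMeasurable_setAverage_ball_abs_sub hu x r).aestronglyMeasurable.mul
      hρ.abs.aestronglyMeasurable
  · rw [norm_mul, Real.norm_eq_abs |ρ y|, abs_abs]
    gcongr
    refine norm_average_le_of_norm_le_const (by positivity) (ae_of_all _ fun p => ?_)
    rw [Real.norm_eq_abs, abs_abs]
    exact (abs_sub _ _).trans (add_le_add (huM _) (huM _))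
  · filter_upwards [hx] with y hy
    simpa only [zero_mul] using Tendsto.mul_const |ρ y| hy

end ProductBalls

section LebesguePointFiberIntegral

variable {X G : Type*} [PseudoMetricSpace X] [ProperSpace X] [MeasurableSpace X]
  [SeminormedAddCommGroup G] [ProperSpace G] [MeasurableSpace G] [BorelSpace G]
  {μ : Measure X} [IsFiniteMeasureOnCompacts μ] [μ.IsOpenPosMeasure]
  {ν : Measure G} [ν.IsAddHaarMeasure]
  {u : X × G → ℝ} {M : ℝ} {ρ : G → ℝ}

lemma setAverage_ball_abs_fiberIntegral_sub_le (hu : Measurable u) (huM : ∀ p, |u p| ≤ M)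
    (hρ : Integrable ρ ν) (x : X) {r : ℝ} (hr : 0 < r) :
    ⨍ x' in Metric.ball x r, |fiberIntegral ν u ρ x' - fiberIntegral ν u ρ x| ∂μ
      ≤ M * ⨍ z in Metric.ball 0 r, translationModulus ν ρ z ∂ν
        + ∫ y, (⨍ p in Metric.ball (x, y) r, |u p - u (x, y)| ∂μ.prod ν) * |ρ y| ∂ν := by
  have hμ₀ : μ (Metric.ball x r) ≠ 0 := (Metric.measure_ball_pos μ x hr).ne'
  have hν₀ : ν (Metric.ball 0 r) ≠ 0 := (Metric.measure_ball_pos ν 0 hr).ne'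
  rw [← setAverage_prod_fst (μ := μ) (ν := ν) _ hν₀ measure_ball_lt_top.ne,
    ← setAverage_prod_snd (μ := μ) (ν := ν) _ hμ₀ measure_ball_lt_top.ne, ball_prod_same]
  simp only [← setAverage_ball_prod_translate (fun p => |u p - u (x, _)|)]
  exact integral_abs_fiberIntegral_sub_le hu huM hρ _ x

theorem lebesguePoint_fiberIntegral (hu : Measurable u) (huM : ∀ p, |u p| ≤ M)
    (hρ : Integrable ρ ν) {x : X} (hx : ∀ᵐ y ∂ν, LebesguePoint (μ.prod ν) u (x, y)) :
    LebesguePoint μ (fiberIntegral ν u ρ) x := by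
  have hmod : Tendsto (fun r : ℝ => ⨍ z in Metric.ball 0 r, translationModulus ν ρ z ∂ν)
      (𝓝[>] 0) (𝓝 0) := by
    simpa only [LebesguePoint, translationModulus_zero, sub_zero,
      abs_of_nonneg (translationModulus_nonneg _)] using
      lebesguePoint_of_continuousAt ν (continuous_translationModulus hρ).continuousAt (x := 0)
  have hosc := tendsto_integral_setAverage_ball_abs_sub_mul hu huM hρ hx
  refine squeeze_zero' (.of_forall fun r => integral_nonneg fun _ => abs_nonneg _) ?_
    (by simpa only [mul_zero, add_zero] using (hmod.const_mul M).add hosc)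
  filter_upwards [self_mem_nhdsWithin] with r hr
  exact setAverage_ball_abs_fiberIntegral_sub_le hu huM hρ x hr

end LebesguePointFiberIntegral

theorem lebesgue_points_of_averages_general {V W : Type*}
    [NormedAddCommGroup V] [NormedSpace ℝ V] [FiniteDimensional ℝ V] [MeasurableSpace V]
    [BorelSpace V] [NormedAddCommGroup W] [NormedSpace ℝ W] [FiniteDimensional ℝ W]
    [MeasurableSpace W] [BorelSpace W] (μ : Measure V) [μ.IsAddHaarMeasure] (ν : Measure W)
    [ν.IsAddHaarMeasure] {u : V × W → ℝ} (hu : Measurable u) {M : ℝ} (huM : ∀ p, |u p| ≤ M) :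
    (∀ᵐ x ∂μ, ∀ᵐ y ∂ν, LebesguePoint (μ.prod ν) u (x, y)) ∧
      ∀ x, (∀ᵐ y ∂ν, LebesguePoint (μ.prod ν) u (x, y)) → ∀ ρ : W → ℝ, Integrable ρ ν →
        LebesguePoint μ (fiberIntegral ν u ρ) x := by
  have := FiniteDimensional.proper_real V
  have := FiniteDimensional.proper_real W
  have hloc : LocallyIntegrable u (μ.prod ν) :=
    (memLp_top_of_bound hu.aestronglyMeasurable M (ae_of_all _ huM)).locallyIntegrable le_top
  exact ⟨Measure.ae_ae_of_ae_prod (ae_lebesguePoint _ hloc),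
    fun x hx ρ hρ => lebesguePoint_fiberIntegral hu huM hρ hx⟩

/-- If `u ∈ L^∞(ℝ^n × ℝ^m)` and `E` is the set of `x ∈ ℝ^n` such that `(x,y)` is a Lebesgue
point of `u` for a.e. `y ∈ ℝ^m`, then `E` has full measure and every `x ∈ E` is a Lebesgue
point of `I_ρ(x) = ∫ u(x,y) ρ(y) dy`, simultaneously for all `ρ ∈ L¹(ℝ^m)`. -/
theorem lebesgue_points_of_averages (n m : ℕ)
    (u : (Fin n → ℝ) × (Fin m → ℝ) → ℝ) (hmeas : Measurable u)
    (M : ℝ) (hbound : ∀ p, |u p| ≤ M)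
    (E : Set (Fin n → ℝ))
    (hE : E = {x | ∀ᵐ y : Fin m → ℝ, LebesguePoint volume u (x, y)}) :
    volume Eᶜ = 0 ∧
      ∀ x ∈ E, ∀ ρ : (Fin m → ℝ) → ℝ, Integrable ρ →
        LebesguePoint volume (fun x' => ∫ y, u (x', y) * ρ y) x := by
  subst hE
  exact lebesgue_points_of_averages_general volume volume hmeas hbound
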